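/- The Non-atomic Filtered Greedy Strategy is a 3-approximation for LTSP: let B0 be the schedule output by the Filtered Greedy Strategy, and let B be obtained from B0 by any finite sequence of replacement steps in which, for some file f, all mini-batches with leftmost file f are removed and a single mini-batch (f, f*) is added, each such step being performed only if it strictly decreases the objective value v. Then v(B) ≤ v(B0) ≤ 3 · v(B1) for every schedule B1. -/

import Mathlib

/-!
No schedule can serve file `f` before time `tapeLen - leftPos f`, the time the head needs to reach
the left edge of `f` (`le_resp`). Under the Greedy Strategy the detours made before serving a
requested file `f` are the atomic mini-batches strictly to its right, which have total size at most
`tapeLen - leftPos f`; each block costs two time steps, so the response time is at most three times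
the lower bound (`v_GS_le`).

All schedules met by the Filtered Greedy Strategy consist of atomic mini-batches. For these the
response times are explicit (`resp_atomic_mem`, `resp_atomic_not_mem`), and removing `(f, f)`
changes the objective by exactly twice the difference of the two sides of Inequality (2), up to the
shift between the block number `lB` and the coordinate `leftPos` (`v_erase`). Hence every step of
the filter is an improvement, and the factor 3 of the Greedy Strategy is inherited. The replacement
steps improve the objective by definition.
-/

open Finset

namespace LTSP

variable (N : ℕ) (s : Fin N → ℕ) (n : Fin N → ℕ)

/-- Left edge (0-based coordinate) of file `f`: file `f` occupies the blocks
`leftPos f + 1, …, leftPos f + s f` of the tape. -/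
def leftPos (f : Fin N) : ℕ := ∑ j ∈ Finset.Iio f, s j

/-- Leftmost block of file `f`: `l(f) = 1 + ∑_{j<f} s j`. -/
def lB (f : Fin N) : ℕ := 1 + leftPos N s f

/-- Tape length `m = ∑ s f`. -/
def tapeLen : ℕ := ∑ j, s j

/-- Left edge `l(b)` (0-based coordinate) of a mini-batch `b = (b.1, b.2)`. -/
def Lb (b : Fin N × Fin N) : ℕ := leftPos N s b.1

/-- Right edge of a mini-batch; numerically this equals its rightmost block `r(b)`. -/
def Rb (b : Fin N × Fin N) : ℕ := leftPos N s b.2 + s b.2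

/-- Size of a mini-batch: `s(b) = r(b) - l(b) + 1`. -/
def sb (b : Fin N × Fin N) : ℕ := Rb N s b - Lb N s b

/-- `f ∈ F(b)` : file `f` is contained in the mini-batch `b`. -/
def Covers (b : Fin N × Fin N) (f : Fin N) : Prop := b.1 ≤ f ∧ f ≤ b.2

/-- `f ∈ F(B)` : file `f` is traversed by some mini-batch of the schedule `B`. -/
def InF (B : Finset (Fin N × Fin N)) (f : Fin N) : Prop := ∃ b ∈ B, Covers N b f

/-- A schedule is a finite set of mini-batches, i.e. pairs `(f, f')` with `f ≤ f'`. -/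
def Valid (B : Finset (Fin N × Fin N)) : Prop := ∀ b ∈ B, b.1 ≤ b.2

/-- `b'` is executed strictly before `b`: mini-batches are executed in decreasing order
of their leftmost blocks, ties broken by executing larger mini-batches first. -/
def ExecBefore (b' b : Fin N × Fin N) : Prop :=
  Lb N s b < Lb N s b' ∨ (Lb N s b' = Lb N s b ∧ Rb N s b < Rb N s b')

open scoped Classical in
/-- Time step at which the read movement of mini-batch `b ∈ B` begins: the head starts at
position `m` at time `0`, moves left one block per time step, and detours `2 s(b')` time
steps for every mini-batch `b'` executed before `b`. -/
noncomputable def startTime (B : Finset (Fin N × Fin N)) (b : Fin N × Fin N) : ℕ :=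
  (tapeLen N s - Lb N s b) + 2 * ∑ b' ∈ B.filter (fun b' => ExecBefore N s b' b), sb N s b'

/-- Time step at which the left-to-right traversal of file `f` within the read movement
of mini-batch `b` begins. -/
noncomputable def travTime (B : Finset (Fin N × Fin N)) (f : Fin N) (b : Fin N × Fin N) : ℕ :=
  startTime N s B b + (leftPos N s f - Lb N s b)

/-- Time step at which Phase 2 begins (the head has descended the whole tape, detouring
`2 s(b)` time steps for each executed mini-batch). -/
noncomputable def phase2Start (B : Finset (Fin N × Fin N)) : ℕ :=
  tapeLen N s + 2 * ∑ b ∈ B, sb N s b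

open scoped Classical in
/-- Response time of the requests of file `f` under schedule `B`: the time step at which the
first complete left-to-right traversal of `f` begins (within the first mini-batch of `B`
containing `f` if one exists, and during Phase 2 otherwise). -/
noncomputable def resp (B : Finset (Fin N × Fin N)) (f : Fin N) : ℕ :=
  if h : (B.filter (fun b => Covers N b f)).Nonempty then
    (B.filter (fun b => Covers N b f)).inf' h (travTime N s B f)
  else phase2Start N s B + leftPos N s f

/-- Objective value of a schedule: the sum of the response times of all requests
(file `f` contributes `n f` times its response time). -/
noncomputable def v (B : Finset (Fin N × Fin N)) : ℕ :=
  ∑ f, n f * resp N s B f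

/-- A schedule is optimal if its objective value is minimum among all schedules. -/
def Optimal (B : Finset (Fin N × Fin N)) : Prop :=
  Valid N B ∧ ∀ B' : Finset (Fin N × Fin N), Valid N B' → v N s n B ≤ v N s n B'

open scoped Classical in
/-- Left-hand side of Inequalities (1)/(2): `n(f)·(l(f) + ∑_{b ∈ B, r(b) < l(f)} s(b))`. -/
noncomputable def ineqLHS (B : Finset (Fin N × Fin N)) (f : Fin N) : ℕ :=
  n f * (lB N s f + ∑ b ∈ B.filter (fun b => Rb N s b < lB N s f), sb N s b)

open scoped Classical in
/-- Right-hand side of Inequalities (1)/(2):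
`s(f)·(∑_{f', l(f') < l(f)} n(f') + ∑_{f' ∉ F(B), l(f') > l(f)} n(f'))`. -/
noncomputable def ineqRHS (B : Finset (Fin N × Fin N)) (f : Fin N) : ℕ :=
  s f * ((∑ f' ∈ Finset.univ.filter (fun f' => lB N s f' < lB N s f), n f') +
    ∑ f' ∈ Finset.univ.filter (fun f' => ¬ InF N B f' ∧ lB N s f < lB N s f'), n f')

/-- Inequality (1). -/
def Ineq1 (B : Finset (Fin N × Fin N)) (f : Fin N) : Prop :=
  ineqRHS N s n B f < ineqLHS N s n B f

/-- Inequality (2). -/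
def Ineq2 (B : Finset (Fin N × Fin N)) (f : Fin N) : Prop :=
  ineqLHS N s n B f < ineqRHS N s n B f

/-- The Greedy Strategy schedule: one atomic mini-batch `(f, f)` for every file with at
least one request, except the leftmost file of the tape. -/
def GS (hN : 0 < N) : Finset (Fin N × Fin N) :=
  (Finset.univ.filter (fun f : Fin N => 0 < n f ∧ f ≠ ⟨0, hN⟩)).image (fun f => (f, f))

/-- One step of the Filtered Greedy Strategy: remove an atomic mini-batch `(f, f)` that
satisfies Inequality (2) with respect to the current schedule. -/
def FGSStep (B B' : Finset (Fin N × Fin N)) : Prop :=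
  ∃ f : Fin N, (f, f) ∈ B ∧ Ineq2 N s n B f ∧ B' = B.erase (f, f)

/-- One replacement step of the Non-atomic Filtered Greedy Strategy: for some file `f`, all
mini-batches with leftmost file `f` are removed and a single mini-batch `(f, f*)` is added,
and the step is performed only if it strictly decreases the objective value. -/
def NFGSStep (B B' : Finset (Fin N × Fin N)) : Prop :=
  ∃ f fstar : Fin N, f ≤ fstar ∧
    B' = insert (f, fstar) (B.filter (fun b => b.1 ≠ f)) ∧
    v N s n B' < v N s n B

/-! ### Tape geometry and the lower bound on response times -/

theorem leftPos_mono {f g : Fin N} (h : f ≤ g) : leftPos N s f ≤ leftPos N s g :=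
  Finset.sum_le_sum_of_subset (Finset.Iio_subset_Iio h)

theorem leftPos_add_le {f g : Fin N} (h : f < g) : leftPos N s f + s f ≤ leftPos N s g := by
  have h1 : leftPos N s f + s f = ∑ j ∈ insert f (Finset.Iio f), s j := by
    rw [Finset.sum_insert (by simp), add_comm]; rfl
  rw [h1]
  apply Finset.sum_le_sum_of_subset
  intro j hj
  simp only [Finset.mem_insert, Finset.mem_Iio] at hj ⊢
  rcases hj with rfl | hj
  · exact h
  · exact hj.trans h

theorem leftPos_lt (hs : ∀ f, 1 ≤ s f) {f g : Fin N} :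
    leftPos N s f < leftPos N s g ↔ f < g := by
  constructor
  · intro h
    by_contra hc
    exact absurd (leftPos_mono N s (not_lt.mp hc)) (not_le.mpr h)
  · intro h
    have := leftPos_add_le N s h
    have := hs f
    omega

/-- The files of `A` to the right of the left edge of `f` fit on the rest of the tape. -/
theorem leftPos_add_sum_gt_le (A : Finset (Fin N)) (f : Fin N) :
    leftPos N s f + ∑ g ∈ A with f < g, s g ≤ tapeLen N s := by
  unfold leftPos tapeLen
  rw [← Finset.sum_union]
  · exact Finset.sum_le_sum_of_subset (Finset.subset_univ _)
  · rw [Finset.disjoint_left]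
    intro g hg hg'
    simp only [Finset.mem_Iio, Finset.mem_filter] at hg hg'
    exact absurd hg (not_lt.mpr hg'.2.le)

/-- No request of `f` is served before the head can reach the left edge of `f`. -/
theorem le_resp (B : Finset (Fin N × Fin N)) (f : Fin N) :
    tapeLen N s - leftPos N s f ≤ resp N s B f := by
  classical
  unfold resp
  split_ifs with h
  · rw [Finset.le_inf'_iff]
    intro b hb
    have hc : b.1 ≤ f := (Finset.mem_filter.mp hb).2.1
    have := leftPos_mono N s hc
    unfold travTime startTime Lb
    omega
  · unfold phase2Start
    omega

/-! ### Atomic schedules -/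

/-- The schedule of the atomic mini-batches of the files in `A`. -/
def atomic (A : Finset (Fin N)) : Finset (Fin N × Fin N) := A.image (fun f => (f, f))

theorem sb_diag (f : Fin N) : sb N s (f, f) = s f := by
  simp [sb, Rb, Lb]

theorem mem_atomic {A : Finset (Fin N)} {b : Fin N × Fin N} :
    b ∈ atomic N A ↔ b.1 = b.2 ∧ b.1 ∈ A := by
  simp only [atomic, Finset.mem_image]
  constructor
  · rintro ⟨f, hf, rfl⟩
    exact ⟨rfl, hf⟩
  · rintro ⟨h1, h2⟩
    exact ⟨b.1, h2, Prod.ext rfl h1⟩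

theorem diag_injective : Function.Injective (fun f : Fin N => (f, f)) :=
  fun _ _ h => congrArg Prod.fst h

theorem atomic_erase (A : Finset (Fin N)) (f : Fin N) :
    (atomic N A).erase (f, f) = atomic N (A.erase f) :=
  (Finset.image_erase (diag_injective N) A f).symm

theorem sum_atomic (A : Finset (Fin N)) : ∑ b ∈ atomic N A, sb N s b = ∑ f ∈ A, s f := by
  unfold atomic
  rw [Finset.sum_image (fun _ _ _ _ h => diag_injective N h)]
  exact Finset.sum_congr rfl fun f _ => sb_diag N s f

theorem sum_atomic_filter (A : Finset (Fin N)) (p : Fin N × Fin N → Prop) (q : Fin N → Prop)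
    {_ : DecidablePred p} [DecidablePred q] (h : ∀ f, p (f, f) ↔ q f) :
    ∑ b ∈ (atomic N A).filter p, sb N s b = ∑ f ∈ A with q f, s f := by
  have : (atomic N A).filter p = atomic N (A.filter q) := by
    ext ⟨a, b⟩
    simp only [Finset.mem_filter, mem_atomic]
    constructor
    · rintro ⟨⟨rfl, h2⟩, h3⟩
      exact ⟨rfl, h2, (h _).mp h3⟩
    · rintro ⟨rfl, h2, h3⟩
      exact ⟨⟨rfl, h2⟩, (h _).mpr h3⟩
  rw [this, sum_atomic]

theorem covers_diag {f g : Fin N} : Covers N (g, g) f ↔ g = f :=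
  ⟨fun h => le_antisymm h.1 h.2, fun h => ⟨h.le, h.ge⟩⟩

theorem inF_atomic {A : Finset (Fin N)} {f : Fin N} : InF N (atomic N A) f ↔ f ∈ A := by
  constructor
  · rintro ⟨⟨a, b⟩, hb, hc⟩
    obtain ⟨h1, h2⟩ := (mem_atomic N).mp hb
    dsimp only at h1 h2
    subst h1
    rwa [(covers_diag N).mp hc] at h2
  · intro h
    exact ⟨(f, f), (mem_atomic N).mpr ⟨rfl, h⟩, (covers_diag N).mpr rfl⟩

theorem execBefore_diag (hs : ∀ f, 1 ≤ s f) {f g : Fin N} :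
    ExecBefore N s (g, g) (f, f) ↔ f < g := by
  have := leftPos_lt N s hs (f := f) (g := g)
  have h2 := leftPos_lt N s hs (f := g) (g := f)
  simp only [ExecBefore, Lb, Rb]
  rw [this]
  constructor
  · rintro (h | ⟨h, h'⟩)
    · exact h
    · -- equal left edges force `f = g`, since files have positive size
      rcases lt_trichotomy f g with hl | rfl | hl
      · exact hl
      · omega
      · have := h2.mpr hl
        omega
  · exact Or.inl

theorem resp_atomic_mem (hs : ∀ f, 1 ≤ s f) (A : Finset (Fin N)) {f : Fin N} (hf : f ∈ A) :
    resp N s (atomic N A) f = tapeLen N s - leftPos N s f + 2 * ∑ g ∈ A with f < g, s g := by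
  classical
  have hset : (atomic N A).filter (fun b => Covers N b f) = {(f, f)} := by
    ext ⟨a, b⟩
    simp only [Finset.mem_filter, mem_atomic, Finset.mem_singleton, Prod.mk.injEq]
    constructor
    · rintro ⟨⟨rfl, _⟩, h⟩
      have := (covers_diag N).mp h
      exact ⟨this, this⟩
    · rintro ⟨rfl, rfl⟩
      exact ⟨⟨rfl, hf⟩, (covers_diag N).mpr rfl⟩
  have hval : travTime N s (atomic N A) f (f, f)
      = tapeLen N s - leftPos N s f + 2 * ∑ g ∈ A with f < g, s g := by
    unfold travTime startTime
    rw [sum_atomic_filter N s A _ (fun g => f < g)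
      (fun g => execBefore_diag N s hs)]
    simp only [Lb, Nat.sub_self, Nat.add_zero]
  rw [← hval]
  unfold resp
  split_ifs with h
  · apply le_antisymm
    · refine Finset.inf'_le _ ?_
      simpa [mem_atomic, covers_diag] using hf
    · rw [Finset.le_inf'_iff]
      intro b hb
      have hb' : b ∈ (atomic N A).filter (fun b => Covers N b f) := by
        simpa using hb
      rw [hset, Finset.mem_singleton] at hb'
      rw [hb']
  · exact absurd ⟨(f, f), by simpa [mem_atomic, covers_diag] using hf⟩ h

theorem resp_atomic_not_mem (A : Finset (Fin N)) {f : Fin N} (hf : f ∉ A) :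
    resp N s (atomic N A) f = tapeLen N s + 2 * ∑ g ∈ A, s g + leftPos N s f := by
  classical
  unfold resp
  rw [dif_neg, phase2Start, sum_atomic]
  rintro ⟨b, hb⟩
  obtain ⟨h1, h2⟩ := Finset.mem_filter.mp hb
  exact hf ((inF_atomic N).mp ⟨b, h1, h2⟩)

/-! ### The Greedy Strategy -/

theorem v_GS_le (hN : 0 < N) (hs : ∀ f, 1 ≤ s f) (B1 : Finset (Fin N × Fin N)) :
    v N s n (GS N n hN) ≤ 3 * v N s n B1 := by
  unfold v
  rw [Finset.mul_sum]
  apply Finset.sum_le_sum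
  intro f _
  rcases Nat.eq_zero_or_pos (n f) with h0 | hpos
  · simp [h0]
  rw [Nat.mul_left_comm]
  apply Nat.mul_le_mul_left
  refine le_trans ?_ (Nat.mul_le_mul_left 3 (le_resp N s B1 f))
  set A : Finset (Fin N) := Finset.univ.filter (fun f : Fin N => 0 < n f ∧ f ≠ ⟨0, hN⟩) with hA
  have hGS : GS N n hN = atomic N A := rfl
  rw [hGS]
  by_cases hf : f = ⟨0, hN⟩
  · -- the leftmost file is served at the start of Phase 2
    have hp : leftPos N s f = 0 := by
      unfold leftPos
      apply Finset.sum_eq_zero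
      intro j hj
      rw [Finset.mem_Iio, hf] at hj
      exact absurd hj (by simp [Fin.lt_def])
    rw [resp_atomic_not_mem N s A (by simp [hA, hf]), hp]
    have : ∑ g ∈ A, s g ≤ tapeLen N s := Finset.sum_le_sum_of_subset (Finset.subset_univ _)
    omega
  · rw [resp_atomic_mem N s hs A (by simp [hA, hf, hpos])]
    have := leftPos_add_sum_gt_le N s A f
    omega

/-! ### Removing an atomic mini-batch -/

theorem sum_split (A : Finset (Fin N)) {f : Fin N} (hf : f ∈ A) :
    ∑ g ∈ A, s g = s f + ∑ g ∈ A with g < f, s g + ∑ g ∈ A with f < g, s g := by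
  rw [Finset.sum_filter, Finset.sum_filter, ← Finset.add_sum_erase A s hf,
    ← Finset.add_sum_erase A _ hf, ← Finset.add_sum_erase A (fun g => if f < g then s g else 0) hf]
  simp only [lt_irrefl, if_false, Nat.zero_add]
  rw [add_assoc, ← Finset.sum_add_distrib]
  congr 1
  apply Finset.sum_congr rfl
  intro g hg
  rcases lt_or_gt_of_ne (Finset.ne_of_mem_erase hg) with h | h
  · simp [h, h.not_gt]
  · simp [h, h.not_gt]

/-- Exact change of the objective when the atomic mini-batch of `f` is removed: the files served
after its detour gain `2 * s f`, and `f` itself waits for Phase 2. -/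
theorem v_erase (hs : ∀ f, 1 ≤ s f) (A : Finset (Fin N)) {f : Fin N} (hf : f ∈ A) :
    v N s n (atomic N (A.erase f)) + 2 * (s f * ((∑ g with g < f, n g) +
        ∑ g with g ∉ A ∧ f < g, n g))
      = v N s n (atomic N A) +
        2 * (n f * (leftPos N s f + ∑ g ∈ A with g < f, s g)) := by
  set c := leftPos N s f + ∑ g ∈ A with g < f, s g with hc
  have key : ∀ g : Fin N, n g * resp N s (atomic N (A.erase f)) g +
      (2 * s f * (if g < f then n g else 0) + 2 * s f * (if g ∉ A ∧ f < g then n g else 0))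
      = n g * resp N s (atomic N A) g + (if g = f then 2 * (n f * c) else 0) := by
    intro g
    have htot := Finset.add_sum_erase A s hf
    by_cases hgf : g = f
    · subst hgf
      rw [resp_atomic_not_mem N s _ (Finset.notMem_erase g A), resp_atomic_mem N s hs A hf]
      have h1 := sum_split N s A hf
      have h2 := leftPos_add_sum_gt_le N s A g
      have h3 : tapeLen N s + 2 * ∑ x ∈ A.erase g, s x + leftPos N s g
          = tapeLen N s - leftPos N s g + 2 * (∑ x ∈ A with g < x, s x) + 2 * c := by omega
      rw [h3]
      simp only [lt_irrefl, and_false, if_false, if_true]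
      ring
    · by_cases hgA : g ∈ A
      · rw [resp_atomic_mem N s hs A hgA,
          resp_atomic_mem N s hs _ (Finset.mem_erase.mpr ⟨hgf, hgA⟩), Finset.filter_erase]
        by_cases hlt : g < f
        · have h1 := Finset.add_sum_erase (A.filter (fun x => g < x)) s
            (Finset.mem_filter.mpr ⟨hf, hlt⟩)
          rw [← h1]
          simp only [hlt, hgA, hgf, not_true_eq_false, false_and, if_false, if_true]
          ring
        · rw [Finset.erase_eq_of_notMem (by simp [hlt])]
          simp [hlt, hgA, hgf]
      · rw [resp_atomic_not_mem N s A hgA,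
          resp_atomic_not_mem N s _ (fun h => hgA (Finset.mem_of_mem_erase h)), ← htot]
        rcases lt_or_gt_of_ne hgf with h | h
        · simp only [h, h.not_gt, hgA, hgf, and_false, if_false, if_true]
          ring
        · simp only [h, h.not_gt, hgA, hgf, not_false_eq_true, and_self, if_false, if_true]
          ring
  have hsum := Finset.sum_congr (rfl : (Finset.univ : Finset (Fin N)) = Finset.univ)
    (fun g _ => key g)
  simp only [Finset.sum_add_distrib, ← Finset.mul_sum, ← Finset.sum_filter] at hsum
  unfold v
  rw [Finset.sum_filter (fun g => g = f), Finset.sum_ite_eq' Finset.univ f] at hsum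
  simp only [Finset.mem_univ, if_true] at hsum
  linarith

/-- A step of the filter does not worsen an atomic schedule. -/
theorem v_erase_le (hs : ∀ f, 1 ≤ s f) (A : Finset (Fin N)) {f : Fin N} (hf : f ∈ A)
    (h : Ineq2 N s n (atomic N A) f) :
    v N s n (atomic N (A.erase f)) ≤ v N s n (atomic N A) := by
  classical
  have hv := v_erase N s n hs A hf
  have hR : ineqRHS N s n (atomic N A) f = s f * ((∑ g with g < f, n g) +
      ∑ g with g ∉ A ∧ f < g, n g) := by
    unfold ineqRHS
    have hl : ∀ a b : Fin N, lB N s a < lB N s b ↔ a < b := fun a b => by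
      rw [← leftPos_lt N s hs]
      unfold lB
      omega
    simp only [hl, inF_atomic]
  have hL : ineqLHS N s n (atomic N A) f
      = n f * (1 + leftPos N s f + ∑ g ∈ A with g < f, s g) := by
    unfold ineqLHS
    rw [sum_atomic_filter N s A _ (fun g => g < f)]
    · unfold lB
      rfl
    · intro g
      unfold Rb lB
      constructor
      · intro h
        by_contra hc
        have := leftPos_mono N s (not_lt.mp hc)
        have := hs g
        dsimp only at h
        omega
      · intro h
        have := leftPos_add_le N s h
        dsimp only
        omega
  unfold Ineq2 at h
  rw [hR, hL] at h
  have : n f * (leftPos N s f + ∑ g ∈ A with g < f, s g)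
      ≤ n f * (1 + leftPos N s f + ∑ g ∈ A with g < f, s g) := Nat.mul_le_mul_left _ (by omega)
  omega

theorem filtered_atomic (hN : 0 < N) (hs : ∀ f, 1 ≤ s f) (B0 : Finset (Fin N × Fin N))
    (hreach0 : Relation.ReflTransGen (FGSStep N s n) (GS N n hN) B0) :
    (∃ A, B0 = atomic N A) ∧ v N s n B0 ≤ v N s n (GS N n hN) := by
  induction hreach0 with
  | refl => exact ⟨⟨_, rfl⟩, le_rfl⟩
  | tail _ hstep ih =>
    obtain ⟨⟨A, rfl⟩, hle⟩ := ih
    obtain ⟨f, hf, hineq, rfl⟩ := hstep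
    rw [atomic_erase]
    exact ⟨⟨_, rfl⟩, (v_erase_le N s n hs A ((mem_atomic N).mp hf).2 hineq).trans hle⟩

/-- The Non-atomic Filtered Greedy Strategy is a 3-approximation for LTSP: if `B0` is output
by the Filtered Greedy Strategy and `B` is obtained from `B0` by a finite sequence of
value-decreasing replacement steps, then `v(B) ≤ v(B0) ≤ 3 · v(B1)` for every schedule `B1`. -/
theorem stmt13 (hN : 0 < N) (hs : ∀ f, 1 ≤ s f) (B0 B : Finset (Fin N × Fin N))
    (hreach0 : Relation.ReflTransGen (FGSStep N s n) (GS N n hN) B0)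
    (hterm0 : ¬ ∃ f : Fin N, (f, f) ∈ B0 ∧ Ineq2 N s n B0 f)
    (hreach : Relation.ReflTransGen (NFGSStep N s n) B0 B) :
    v N s n B ≤ v N s n B0 ∧
      ∀ B1 : Finset (Fin N × Fin N), Valid N B1 → v N s n B0 ≤ 3 * v N s n B1 := by
  refine ⟨?_, fun B1 _ => (filtered_atomic N s n hN hs B0 hreach0).2.trans
    (v_GS_le N s n hN hs B1)⟩
  induction hreach with
  | refl => exact le_rfl
  | tail _ hstep ih =>
    obtain ⟨_, _, _, _, hlt⟩ := hstep
    exact hlt.le.trans ih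

end LTSP
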